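/- Let R be a noetherian normal integral domain with fraction field K and let A be a finite flat R-algebra whose generic fiber A^K = K ⊗_R A splits. Then the map Spec(R) → ℕ, p ↦ #Bl(A(p)), is lower semicontinuous, and Spec(R) = ⨿_{n∈ℕ} Bl_n(A) is a stratification into locally closed subsets where Bl_n(A) := {p : #Bl(A(p)) = n}. Moreover, the maximum of #Bl(A(p)) over p ∈ Spec(R) equals #Bl(A^K), and BlEx(A) := {p ∈ Spec(R) : #Bl(A(p)) < #Bl(A^K)} is a closed subset that is either empty or pure of codimension one in Spec(R) with finitely many irreducible components. -/

import Mathlib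

open TensorProduct

section BlockDefs
variable {B : Type*} [Ring B]
def IsBlockIdem (e : B) : Prop :=
  IsIdempotentElem e ∧ e ≠ 0 ∧ (∀ x : B, e * x = x * e) ∧
    ∀ f g : B, (∀ x : B, f * x = x * f) → (∀ x : B, g * x = x * g) →
      IsIdempotentElem f → IsIdempotentElem g → f * g = 0 → f + g = e → f = 0 ∨ g = 0
end BlockDefs

noncomputable def numBlocks (B : Type*) [Ring B] : ℕ := Nat.card {e : B // IsBlockIdem e}

/-- A finite-dimensional algebra over a field `K` is split if the endomorphisms of every
simple module are exactly the scalars `K`. -/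
def IsSplitAlgebra (K : Type u) (B : Type v) [Field K] [Ring B] [Algebra K B] : Prop :=
  ∀ (S : Type v) [AddCommGroup S] [Module B S], IsSimpleModule B S →
    ∀ f : S →ₗ[B] S, ∃ k : K, ∀ s : S, f s = algebraMap K B k • s

/-- The residue field `κ(p)` of `Spec R` at `p`. -/
noncomputable abbrev resFieldAt (R : Type*) [CommRing R] (p : PrimeSpectrum R) :=
  IsLocalRing.ResidueField (Localization.AtPrime p.asIdeal)

def IsIrredCompOf {X : Type*} [TopologicalSpace X] (C s : Set X) : Prop :=
  IsIrreducible C ∧ C ⊆ s ∧ ∀ C' : Set X, IsIrreducible C' → C' ⊆ s → C ⊆ C' → C' = C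

/-- A subset of `Spec R` which is pure of codimension one with finitely many irreducible
components (a reduced Weil divisor). -/
def IsReducedWeilDivisor {R : Type*} [CommRing R] (s : Set (PrimeSpectrum R)) : Prop :=
  {C | IsIrredCompOf C s}.Finite ∧
    ∀ C, IsIrredCompOf C s → ∃ q : PrimeSpectrum R, closure C = closure {q} ∧ Order.height q = 1

/-!
The central idempotents of a finite-dimensional algebra form a Boolean algebra with `2 ^ #Bl`
elements, so the theorem is about central idempotents. Those of `A(p)` correspond bijectively to
those of `A_p`: a central idempotent modulo `p` lifts modulo all powers of `p` by Newton iteration,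
hence by Artin–Rees to a central element `z` of `A_p`. Since `A^K` splits and `R_p` is integrally
closed, `z` is annihilated by a product of linear factors over `R_p`. Separating the roots that lie
in the maximal ideal from the others yields an idempotent polynomial in `z`.

Hence `2 ^ #Bl(A(p))` is the number of central idempotents `e` of `A^K` whose denominator ideal
`{r | r e ∈ A}` is not contained in `p`, and `BlEx(A)` is the union of the zero loci of these
ideals. As `A` is projective, a denominator ideal is a finite intersection of ideals `(R : x)` with
`x ∈ K`, whose minimal primes have height one because `R` is normal.
-/

section CentralIdempotents

/-- The set of central idempotents of a ring. It is a Boolean algebra whose atoms are the block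
idempotents, so blocks can be counted by counting central idempotents. -/
def centralIdempotents (B : Type*) [Ring B] : Set B :=
  {e | IsIdempotentElem e ∧ e ∈ Subring.center B}

variable {B : Type*} [Ring B]

/-- The central idempotents of `B` as the idempotents of its center, on which Mathlib provides the
Boolean algebra structure. -/
def centralIdempotentsEquiv (B : Type*) [Ring B] :
    {e : Subring.center B // IsIdempotentElem e} ≃ centralIdempotents B where
  toFun e := ⟨e.1, congrArg Subtype.val e.2, e.1.2⟩
  invFun e := ⟨⟨e, e.2.2⟩, Subtype.ext e.2.1⟩

lemma isBlockIdem_iff_isAtom (e : {e : Subring.center B // IsIdempotentElem e}) :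
    IsBlockIdem (e.1 : B) ↔ IsAtom e := by
  have le_iff (a b : {e : Subring.center B // IsIdempotentElem e}) :
      a ≤ b ↔ (a.1 : B) * b.1 = a.1 :=
    (Subtype.ext_iff : a.1 * b.1 = a.1 ↔ _)
  have eq_bot_iff (a : {e : Subring.center B // IsIdempotentElem e}) : a = ⊥ ↔ (a.1 : B) = 0 :=
    Subtype.ext_iff.trans Subtype.ext_iff
  have central (a : Subring.center B) (x : B) : a * x = x * a :=
    (Subring.mem_center_iff.1 a.2 x).symm
  constructor
  · rintro ⟨-, he0, -, hprim⟩
    refine ⟨fun h ↦ he0 ((eq_bot_iff e).1 h), fun f hf ↦ ?_⟩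
    have hfe : f.1 * e.1 = f.1 := hf.le
    have hcompl : IsIdempotentElem (e.1 - f.1) := f.2.sub e.2 hfe (by rw [mul_comm, hfe])
    have horth : f.1 * (e.1 - f.1) = 0 := by rw [mul_sub, hfe, f.2.eq, sub_self]
    rcases hprim f.1 (e.1 - f.1 : Subring.center B) (central _) (central _)
      (congrArg Subtype.val f.2) (congrArg Subtype.val hcompl) (congrArg Subtype.val horth)
      (by simp) with hf0 | hef
    · exact (eq_bot_iff f).2 hf0
    · exact absurd (Subtype.ext (sub_eq_zero.1 (Subtype.ext hef)).symm) hf.ne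
  · refine fun he ↦ ⟨congrArg Subtype.val e.2, fun h ↦ he.1 ((eq_bot_iff e).2 h), central e.1, ?_⟩
    intro f g hf _ hfi _ hfg hsum
    have hfc : f ∈ Subring.center B := Subring.mem_center_iff.2 fun x ↦ (hf x).symm
    let f' := (centralIdempotentsEquiv B).symm ⟨f, hfi, hfc⟩
    have hfe : f' ≤ e := (le_iff f' e).2 <| show f * (e.1 : B) = f by
      rw [← hsum, mul_add, hfi.eq, hfg, add_zero]
    rcases he.le_iff.1 hfe with h | h
    · exact Or.inl ((eq_bot_iff f').1 h)
    · have hfe : f = e.1 := congrArg (fun t ↦ (t.1 : B)) h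
      exact Or.inr (by simpa [hfe] using hsum)

lemma card_eq_two_pow_card_isAtom (α : Type*) [BooleanAlgebra α] [Finite α] :
    Nat.card α = 2 ^ Nat.card {a : α // IsAtom a} := by
  have := Fintype.ofFinite α
  let _ := Fintype.toCompleteAtomicBooleanAlgebra α
  rw [Nat.card_congr (CompleteAtomicBooleanAlgebra.toSetOfIsAtom (α := α)).toEquiv]
  simp [Set, Nat.card_fun]

lemma ncard_centralIdempotents (hfin : (centralIdempotents B).Finite) :
    (centralIdempotents B).ncard = 2 ^ numBlocks B := by
  have : Finite (centralIdempotents B) := hfin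
  have := Finite.of_equiv _ (centralIdempotentsEquiv B).symm
  rw [← Nat.card_coe_set_eq, ← Nat.card_congr (centralIdempotentsEquiv B),
    card_eq_two_pow_card_isAtom]
  congr 1
  exact Nat.card_congr
    { toFun a := ⟨a.1.1, (isBlockIdem_iff_isAtom _).2 a.2⟩
      invFun e := ⟨(centralIdempotentsEquiv B).symm
        ⟨e.1, e.2.1, Subring.mem_center_iff.2 fun x ↦ (e.2.2.2.1 x).symm⟩,
        (isBlockIdem_iff_isAtom _).1 e.2⟩ }

lemma finite_centralIdempotents (K : Type*) [Field K] [Algebra K B] [Module.Finite K B] :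
    (centralIdempotents B).Finite := by
  have : Module.Finite K (Subalgebra.center K B) :=
    inferInstanceAs (Module.Finite K (Subalgebra.center K B).toSubmodule)
  have : IsArtinianRing (Subalgebra.center K B) := IsArtinianRing.of_finite K _
  have : Finite {e : Subring.center B // IsIdempotentElem e} :=
    Finite.of_equiv _ (PrimeSpectrum.isIdempotentElemEquivClopens
      (R := Subalgebra.center K B)).symm.toEquiv
  exact Finite.of_equiv _ (centralIdempotentsEquiv B)

lemma mem_center_of_span_eq_top (K : Type*) [CommSemiring K] [Algebra K B] {s : Set B}
    (hspan : Submodule.span K s = ⊤) {z : B} (hz : ∀ y ∈ s, y * z = z * y) :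
    z ∈ Subring.center B := by
  refine Subring.mem_center_iff.2 fun x ↦ ?_
  induction (hspan ▸ Submodule.mem_top : x ∈ Submodule.span K s) using Submodule.span_induction with
  | mem y hy => exact hz y hy
  | zero => simp
  | add u v _ _ hu hv => rw [add_mul, mul_add, hu, hv]
  | smul c u _ hu => rw [smul_mul_assoc, mul_smul_comm, hu]

lemma map_mem_center_of_span_range_eq_top (K : Type*) {D : Type*} [CommSemiring K] [Ring D]
    [Algebra K D] (f : B →+* D) (hspan : Submodule.span K (Set.range f) = ⊤) {z : B}
    (hz : z ∈ Subring.center B) : f z ∈ Subring.center D := by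
  refine mem_center_of_span_eq_top K hspan (Set.forall_mem_range.2 fun b ↦ ?_)
  rw [← map_mul, Subring.mem_center_iff.1 hz, map_mul]

lemma bijOn_centralIdempotents_of_injective (K : Type*) {D : Type*} [CommSemiring K] [Ring D]
    [Algebra K D] (f : B →+* D) (hf : Function.Injective f)
    (hspan : Submodule.span K (Set.range f) = ⊤) :
    Set.BijOn f (centralIdempotents B) (centralIdempotents D ∩ Set.range f) := by
  refine ⟨fun e he ↦ ⟨⟨he.1.map f, map_mem_center_of_span_range_eq_top K f hspan he.2⟩, e, rfl⟩,
    hf.injOn, ?_⟩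
  rintro _ ⟨⟨hidem, hcentral⟩, e, rfl⟩
  refine ⟨e, ⟨hf ?_, Subring.mem_center_iff.2 fun x ↦ hf ?_⟩, rfl⟩
  · rw [map_mul, hidem.eq]
  · rw [map_mul, map_mul, Subring.mem_center_iff.1 hcentral]

end CentralIdempotents

section LiftingModuloIdeal

variable {L B : Type*} [CommRing L] [Ring B] [Algebra L B]

lemma map_mem_smul_of_mem_smul_top {M N : Type*} [AddCommGroup M] [Module L M] [AddCommGroup N]
    [Module L N] {I : Ideal L} {P : Submodule L N} (f : M →ₗ[L] N) (hf : ∀ x, f x ∈ P) {x : M}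
    (hx : x ∈ I • (⊤ : Submodule L M)) : f x ∈ I • P := by
  have hmap : (I • (⊤ : Submodule L M)).map f ≤ I • P := by
    rw [Submodule.map_smul'', Submodule.map_top]
    exact Submodule.smul_mono le_rfl (LinearMap.range_le_iff_comap.2 (eq_top_iff.2 fun x _ ↦ hf x))
  exact hmap (Submodule.mem_map_of_mem hx)

lemma mul_mem_smul_top_left {I : Ideal L} (a : B) {x : B} (hx : x ∈ I • (⊤ : Submodule L B)) :
    a * x ∈ I • (⊤ : Submodule L B) :=
  map_mem_smul_of_mem_smul_top (LinearMap.mulLeft L a) (fun _ ↦ Submodule.mem_top) hx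

lemma mul_mem_smul_top_right {I : Ideal L} (a : B) {x : B} (hx : x ∈ I • (⊤ : Submodule L B)) :
    x * a ∈ I • (⊤ : Submodule L B) :=
  map_mem_smul_of_mem_smul_top (LinearMap.mulRight L a) (fun _ ↦ Submodule.mem_top) hx

lemma mem_map_algebraMap_iff_mem_smul_top (I : Ideal L) (x : B) :
    x ∈ I.map (algebraMap L B) ↔ x ∈ I • (⊤ : Submodule L B) := by
  constructor
  · intro hx
    induction hx using Submodule.span_induction with
    | mem y hy =>
      obtain ⟨r, hr, rfl⟩ := hy
      rw [Algebra.algebraMap_eq_smul_one]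
      exact Submodule.smul_mem_smul hr Submodule.mem_top
    | zero => exact zero_mem _
    | add _ _ _ _ hu hv => exact add_mem hu hv
    | smul b _ _ hu => exact mul_mem_smul_top_left b hu
  · intro hx
    induction hx using Submodule.smul_induction_on' with
    | smul r hr b _ =>
      rw [Algebra.smul_def, Algebra.commutes]
      exact Ideal.mul_mem_left _ b (Ideal.mem_map_of_mem _ hr)
    | add _ _ _ _ hu hv => exact add_mem hu hv

/-- The image of `x` in `B / IB` is a central idempotent. -/
def IsCentralIdempotentMod (I : Ideal L) (x : B) : Prop :=
  x * x - x ∈ I • (⊤ : Submodule L B) ∧ ∀ b, x * b - b * x ∈ I • (⊤ : Submodule L B)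

-- The Newton iterate `3x² - 2x³` for `x² - x = 0` works: writing `d = xb - bx` and `c = xd - dx`,
-- its commutator with `b` is `6(x - x²)d - 3c + 4xc + 2cx`, and `c ∈ I²B` because `d ∈ IB`.
lemma IsCentralIdempotentMod.exists_sq {I : Ideal L} {x : B} (hx : IsCentralIdempotentMod I x) :
    ∃ y : B, y - x ∈ I • (⊤ : Submodule L B) ∧ IsCentralIdempotentMod (I ^ 2) y := by
  obtain ⟨hidem, hcomm⟩ := hx
  have mul_mem {a b : B} (ha : a ∈ I • (⊤ : Submodule L B)) (hb : b ∈ I • (⊤ : Submodule L B)) :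
      a * b ∈ I ^ 2 • (⊤ : Submodule L B) := by
    rw [sq, Submodule.mul_smul]
    exact map_mem_smul_of_mem_smul_top (LinearMap.mulRight L b)
      (fun z ↦ mul_mem_smul_top_left z hb) ha
  refine ⟨3 * (x * x) - 2 * (x * x * x), ?_, ?_, fun b ↦ ?_⟩
  · have : 3 * (x * x) - 2 * (x * x * x) - x = (1 - 2 * x) * (x * x - x) := by noncomm_ring
    exact this ▸ mul_mem_smul_top_left _ hidem
  · have : (3 * (x * x) - 2 * (x * x * x)) * (3 * (x * x) - 2 * (x * x * x)) -
        (3 * (x * x) - 2 * (x * x * x)) =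
        (4 * (x * x) - 4 * x - 3) * ((x * x - x) * (x * x - x)) := by noncomm_ring
    exact this ▸ mul_mem_smul_top_left _ (mul_mem hidem hidem)
  · obtain ⟨d, hd⟩ : ∃ d, d = x * b - b * x := ⟨_, rfl⟩
    obtain ⟨c, hc⟩ : ∃ c, c = x * d - d * x := ⟨_, rfl⟩
    have hdI : d ∈ I • (⊤ : Submodule L B) := hd ▸ hcomm b
    have hcI : c ∈ I ^ 2 • (⊤ : Submodule L B) := by
      rw [hc, sq, Submodule.mul_smul]
      exact map_mem_smul_of_mem_smul_top (LinearMap.mulLeft L x - LinearMap.mulRight L x) hcomm hdI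
    have : (3 * (x * x) - 2 * (x * x * x)) * b - b * (3 * (x * x) - 2 * (x * x * x)) =
        -6 * ((x * x - x) * d) - 3 * c + 4 * x * c + 2 * (c * x) := by
      rw [hc, hd]; noncomm_ring
    rw [this]
    exact add_mem (add_mem (sub_mem (mul_mem_smul_top_left _ (mul_mem hidem hdI))
      (mul_mem_smul_top_left _ hcI)) (mul_mem_smul_top_left _ hcI))
      (mul_mem_smul_top_left _ (mul_mem_smul_top_right _ hcI))

lemma IsCentralIdempotentMod.exists_pow {I : Ideal L} {x : B} (hx : IsCentralIdempotentMod I x)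
    (n : ℕ) : ∃ y : B, y - x ∈ I • (⊤ : Submodule L B) ∧ IsCentralIdempotentMod (I ^ 2 ^ n) y := by
  induction n with
  | zero => exact ⟨x, by simp, by simpa using hx⟩
  | succ n ih =>
    obtain ⟨y, hyx, hy⟩ := ih
    obtain ⟨w, hwy, hw⟩ := hy.exists_sq
    refine ⟨w, ?_, by rwa [pow_succ 2, pow_mul]⟩
    rw [← sub_add_sub_cancel w y x]
    exact add_mem (Submodule.smul_mono_left (Ideal.pow_le_self (by simp)) hwy) hyx

lemma exists_forall_exists_mem_smul_top_of_map_mem_pow_smul_top [IsNoetherianRing L]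
    {M N : Type*} [AddCommGroup M] [Module L M] [AddCommGroup N] [Module L N] [Module.Finite L N]
    (I : Ideal L) (f : M →ₗ[L] N) : ∃ k, ∀ n ≥ k, ∀ x, f x ∈ I ^ n • (⊤ : Submodule L N) →
      ∃ w ∈ I • (⊤ : Submodule L M), f w = f x := by
  obtain ⟨k, hk⟩ := Ideal.exists_pow_inf_eq_pow_smul I (LinearMap.range f)
  refine ⟨k + 1, fun n hn x hx ↦ ?_⟩
  have hmem : f x ∈ I • LinearMap.range f := by
    have : f x ∈ I ^ n • ⊤ ⊓ LinearMap.range f := ⟨hx, x, rfl⟩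
    rw [hk n (by omega)] at this
    exact Submodule.smul_mono (Ideal.pow_le_self (by omega)) inf_le_right this
  rwa [LinearMap.range_eq_map, ← Submodule.map_smul''] at hmem

lemma mem_smul_top_pi {ι : Type*} [Finite ι] {M : Type*} [AddCommGroup M] [Module L M]
    {I : Ideal L} {x : ι → M} (hx : ∀ i, x i ∈ I • (⊤ : Submodule L M)) :
    x ∈ I • (⊤ : Submodule L (ι → M)) := by
  classical
  have := Fintype.ofFinite ι
  rw [← Finset.univ_sum_single x]
  exact sum_mem fun i _ ↦ map_mem_smul_of_mem_smul_top (LinearMap.single L (fun _ ↦ M) i)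
    (fun _ ↦ Submodule.mem_top) (hx i)

-- By Artin–Rees for the commutator map, a lift that is central modulo a high power of `I` can be
-- corrected by an element of `IB` to a central one.
lemma IsCentralIdempotentMod.exists_mem_center [IsNoetherianRing L] [Module.Finite L B]
    {I : Ideal L} {x : B} (hx : IsCentralIdempotentMod I x) :
    ∃ z ∈ Subring.center B, z - x ∈ I • (⊤ : Submodule L B) := by
  obtain ⟨r, b, hb⟩ := Module.Finite.exists_fin (R := L) (M := B)
  let ad : B →ₗ[L] (Fin r → B) :=
    LinearMap.pi fun i ↦ LinearMap.mulRight L (b i) - LinearMap.mulLeft L (b i)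
  have mem_center {a : B} (ha : ad a = 0) : a ∈ Subring.center B :=
    mem_center_of_span_eq_top L hb <| Set.forall_mem_range.2 fun i ↦
      (sub_eq_zero.1 (congrFun ha i)).symm
  obtain ⟨k, hk⟩ := exists_forall_exists_mem_smul_top_of_map_mem_pow_smul_top I ad
  obtain ⟨e, hex, -, hcomm⟩ := hx.exists_pow k
  obtain ⟨w, hw, hwe⟩ := hk _ Nat.lt_two_pow_self.le e (mem_smul_top_pi fun i ↦ hcomm (b i))
  refine ⟨e - w, mem_center (by rw [map_sub, hwe, sub_self]), ?_⟩
  rw [sub_right_comm]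
  exact sub_mem hex hw

lemma eq_zero_of_isIdempotentElem_of_mem_smul_top [Module.Finite L B] {I : Ideal L}
    (hI : I ≤ Ideal.jacobson ⊥) {e : B} (he : IsIdempotentElem e)
    (heI : e ∈ I • (⊤ : Submodule L B)) : e = 0 := by
  let N := LinearMap.range (LinearMap.mulRight L e)
  have hN : N ≤ I • N := by
    rintro _ ⟨b, rfl⟩
    have := map_mem_smul_of_mem_smul_top (LinearMap.mulRight L e) (P := N)
      (fun b ↦ LinearMap.mem_range_self _ b) (mul_mem_smul_top_left b heI)
    rwa [LinearMap.mulRight_apply, mul_assoc, he.eq] at this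
  have hfg : N.FG := Module.Finite.iff_fg.1 inferInstance
  have hN0 : N = ⊥ := Submodule.eq_bot_of_le_smul_of_le_jacobson_bot I N hfg hN hI
  rw [← Submodule.mem_bot L, ← hN0]
  exact ⟨1, one_mul e⟩

lemma eq_of_sub_mem_smul_top_of_mem_centralIdempotents [Module.Finite L B] {I : Ideal L}
    (hI : I ≤ Ideal.jacobson ⊥) {e f : B} (he : e ∈ centralIdempotents B)
    (hf : f ∈ centralIdempotents B) (hef : e - f ∈ I • (⊤ : Submodule L B)) : e = f := by
  have comm : e * f = f * e := Subring.mem_center_iff.1 hf.2 e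
  have mul_one_sub_eq_zero {a b : B} (ha : IsIdempotentElem a) (hb : IsIdempotentElem b)
      (hab : a * b = b * a) (h : a - b ∈ I • (⊤ : Submodule L B)) : a * (1 - b) = 0 := by
    refine eq_zero_of_isIdempotentElem_of_mem_smul_top hI
      (ha.mul_of_commute ((Commute.one_right a).sub_right hab) hb.one_sub) ?_
    have : a * (1 - b) = (a - b) * (1 - b) := by rw [sub_mul, hb.mul_one_sub_self, sub_zero]
    exact this ▸ mul_mem_smul_top_right _ h
  have he' := mul_one_sub_eq_zero he.1 hf.1 comm hef
  have hf' := mul_one_sub_eq_zero hf.1 he.1 comm.symm (neg_sub e f ▸ neg_mem hef)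
  rw [mul_sub, mul_one, sub_eq_zero] at he' hf'
  rw [he', comm, ← hf']

end LiftingModuloIdeal

section SplitCenter

open Polynomial

/-- The minimal polynomial of every central element splits over `K`. For a finite-dimensional
algebra this is implied by being split, but it also holds for every central simple algebra. -/
def HasSplitCenter (K D : Type*) [Field K] [Ring D] [Algebra K D] : Prop :=
  ∀ z ∈ Subring.center D, (minpoly K z).Splits

section Field

variable {K : Type u} {D : Type v} [Field K] [Ring D] [Algebra K D]

lemma splits_of_forall_irreducible_exists_isRoot {f : K[X]}
    (h : ∀ g, Irreducible g → g ∣ f → ∃ a, g.IsRoot a) : f.Splits := by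
  rcases eq_or_ne f 0 with rfl | hf
  · exact .zero
  obtain ⟨u, hu⟩ := UniqueFactorizationMonoid.factors_prod hf
  rw [← hu]
  refine (Splits.multisetProd fun g hg ↦ ?_).mul u.isUnit.splits
  have hirr := UniqueFactorizationMonoid.irreducible_of_factor g hg
  obtain ⟨a, ha⟩ := h g hirr (UniqueFactorizationMonoid.dvd_of_mem_factors hg)
  exact Splits.of_degree_eq_one (degree_eq_one_of_irreducible_of_root hirr ha)

lemma IsSplitAlgebra.exists_sub_algebraMap_mem (hD : IsSplitAlgebra K D) {z : D}
    (hz : z ∈ Subring.center D) (M : Ideal D) [hM : M.IsMaximal] :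
    ∃ k : K, z - algebraMap K D k ∈ M := by
  let f : (D ⧸ M) →ₗ[D] (D ⧸ M) :=
    { toFun s := z • s
      map_add' := smul_add z
      map_smul' d s := by rw [RingHom.id_apply, smul_smul, smul_smul, Subring.mem_center_iff.1 hz] }
  obtain ⟨k, hk⟩ := hD (D ⧸ M) (isSimpleModule_iff_isCoatom.2 hM.out) f
  refine ⟨k, ?_⟩
  have hk1 : z • (Submodule.Quotient.mk 1 : D ⧸ M) = _ := hk (Submodule.Quotient.mk 1)
  simpa only [← Submodule.Quotient.mk_smul, Submodule.Quotient.eq, smul_eq_mul, mul_one] using hk1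

lemma span_aeval_ne_top_of_dvd_minpoly {z : D} (hz : IsIntegral K z) {g : K[X]}
    (hg : ¬ IsUnit g) (hdvd : g ∣ minpoly K z) : Ideal.span {aeval z g} ≠ ⊤ := by
  intro htop
  obtain ⟨h, hgh⟩ := hdvd
  obtain ⟨d, hd⟩ := Ideal.mem_span_singleton'.1 ((Ideal.eq_top_iff_one _).1 htop)
  have hh0 : h ≠ 0 := right_ne_zero_of_mul (hgh ▸ minpoly.ne_zero hz)
  have haeval : aeval z h = 0 := calc
    aeval z h = d * (aeval z g * aeval z h) := by rw [← mul_assoc, hd, one_mul]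
    _ = 0 := by rw [← map_mul, ← hgh, minpoly.aeval, mul_zero]
  have hmul : g * h ∣ 1 * h := by
    rw [← hgh, one_mul]
    exact minpoly.dvd K z haeval
  exact hg (isUnit_of_dvd_one ((mul_dvd_mul_iff_right hh0).1 hmul))

lemma eval_eq_zero_of_sub_algebraMap_mem {z : D} {k : K} {g : K[X]} {M : Ideal D} (hM : M ≠ ⊤)
    (hk : z - algebraMap K D k ∈ M) (hg : aeval z g ∈ M) : g.eval k = 0 := by
  by_contra hne
  obtain ⟨q, hq⟩ := X_sub_C_dvd_sub_C_eval (a := k) (p := g)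
  have hmem : algebraMap K D (g.eval k) ∈ M := by
    have haeval : aeval z g - algebraMap K D (g.eval k) = aeval z q * (z - algebraMap K D k) := by
      simpa [mul_comm] using congrArg (aeval z) hq
    rw [← sub_sub_self (aeval z g) (algebraMap K D (g.eval k)), haeval]
    exact sub_mem hg (M.mul_mem_left _ hk)
  exact hM (M.eq_top_of_isUnit_mem hmem ((isUnit_iff_ne_zero.2 hne).map _))

lemma IsSplitAlgebra.hasSplitCenter [Algebra.IsIntegral K D] (hD : IsSplitAlgebra K D) :
    HasSplitCenter K D := by
  refine fun z hz ↦ splits_of_forall_irreducible_exists_isRoot fun g hg hdvd ↦ ?_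
  obtain ⟨M, hM, hle⟩ := Ideal.exists_le_maximal _
    (span_aeval_ne_top_of_dvd_minpoly (Algebra.IsIntegral.isIntegral z) hg.not_isUnit hdvd)
  obtain ⟨k, hk⟩ := hD.exists_sub_algebraMap_mem hz M
  exact ⟨k, eval_eq_zero_of_sub_algebraMap_mem hM.ne_top hk (hle (Ideal.mem_span_singleton_self _))⟩

end Field

-- The eigenvalues of `j z` lie in `K` and are integral over `L`, hence lie in `L`.
lemma exists_aeval_prod_X_sub_C_eq_zero {L K B D : Type*} [CommRing L] [IsDomain L]
    [IsIntegrallyClosed L] [Field K] [Algebra L K] [IsFractionRing L K] [Ring B] [Algebra L B]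
    [Ring D] [Algebra K D] [Algebra L D] [IsScalarTower L K D] (j : B →ₐ[L] D)
    (hj : Function.Injective j) {z : B} (hz : IsIntegral L z)
    (hsplits : (minpoly K (j z)).Splits) :
    ∃ s : Multiset L, aeval z (s.map fun a ↦ X - C a).prod = 0 := by
  have roots_integral (r : K) (hr : r ∈ (minpoly K (j z)).roots) :
      ∃ l : L, algebraMap L K l = r := by
    obtain ⟨f, hf, hfz⟩ := hz
    refine IsIntegrallyClosed.algebraMap_eq_of_integral ⟨f, hf, ?_⟩
    have hdvd : minpoly K (j z) ∣ f.map (algebraMap L K) := by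
      refine minpoly.dvd K _ ?_
      rw [aeval_map_algebraMap, aeval_algHom_apply, aeval_def, hfz, map_zero]
    simpa only [IsRoot, eval_map] using (mem_roots'.1 hr).2.dvd hdvd
  choose! φ hφ using roots_integral
  have hminpoly : (((minpoly K (j z)).roots.map φ).map fun a ↦ X - C a).prod.map (algebraMap L K) =
      minpoly K (j z) := by
    conv_rhs => rw [hsplits.eq_prod_roots_of_monic (minpoly.monic (hz.map j).tower_top)]
    rw [Polynomial.map_multiset_prod, Multiset.map_map, Multiset.map_map]
    exact congrArg _ (Multiset.map_congr rfl fun r hr ↦ by simp [hφ r hr])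
  refine ⟨(minpoly K (j z)).roots.map φ, hj ?_⟩
  rw [map_zero, ← aeval_algHom_apply, ← aeval_map_algebraMap K, hminpoly, minpoly.aeval]

lemma isCoprime_multiset_prod_left {R : Type*} [CommSemiring R] {s : Multiset R} {b : R}
    (h : ∀ a ∈ s, IsCoprime a b) : IsCoprime s.prod b :=
  Multiset.prod_induction (IsCoprime · b) s (fun _ _ ↦ IsCoprime.mul_left) isCoprime_one_left h

lemma isCoprime_prod_X_sub_C {R : Type*} [CommRing R] {s t : Multiset R}
    (h : ∀ a ∈ s, ∀ b ∈ t, IsUnit (a - b)) :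
    IsCoprime (s.map fun a ↦ X - C a).prod (t.map fun b ↦ X - C b).prod := by
  refine isCoprime_multiset_prod_left (Multiset.forall_mem_map_iff.2 fun a ha ↦ ?_)
  refine (isCoprime_multiset_prod_left (Multiset.forall_mem_map_iff.2 fun b hb ↦ ?_)).symm
  exact (isCoprime_X_sub_C_of_isUnit_sub (h a ha b hb)).symm

variable {L B E : Type*} [CommRing L] [Ring B] [Algebra L B] [Ring E]

-- If `uXF + v(X - 1)G = 1`, then `uXF` evaluated at `z` is idempotent, and modulo `X² - X`
-- it agrees with `X`.
lemma exists_isIdempotentElem_aeval_of_isCoprime (π : B →+* E) {z : B} {F G : L[X]}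
    (hcop : IsCoprime (X * F) ((X - 1) * G)) (hFG : aeval z (F * G) = 0)
    (hz : IsIdempotentElem (π z)) :
    ∃ q : L[X], IsIdempotentElem (aeval z q) ∧ π (aeval z q) = π z := by
  obtain ⟨u, v, huv⟩ := hcop
  refine ⟨u * (X * F), ?_, ?_⟩
  · have : u * (X * F) * (u * (X * F)) = u * (X * F) - u * v * X * (X - 1) * (F * G) := by
      linear_combination (u * (X * F)) * huv
    rw [IsIdempotentElem, ← map_mul, this, map_sub, map_mul _ _ (F * G), hFG, mul_zero, sub_zero]
  · have haeval : aeval z (u * (X * F)) - z = aeval z (-(u * F + v * G)) * (z * z - z) := by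
      simpa using congrArg (aeval z)
        (show u * (X * F) - X = -(u * F + v * G) * (X * X - X) by linear_combination X * huv)
    rw [← sub_eq_zero, ← map_sub, haeval, map_mul, map_sub, map_mul, hz.eq, sub_self, mul_zero]

lemma exists_isIdempotentElem_aeval_of_aeval_prod_eq_zero [IsLocalRing L] (π : B →+* E) {z : B}
    {s : Multiset L} (hs : aeval z (s.map fun a ↦ X - C a).prod = 0)
    (hz : IsIdempotentElem (π z)) :
    ∃ q : L[X], IsIdempotentElem (aeval z q) ∧ π (aeval z q) = π z := by
  classical
  let s₀ := s.filter (· ∈ IsLocalRing.maximalIdeal L)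
  let s₁ := s.filter (· ∉ IsLocalRing.maximalIdeal L)
  have isUnit_sub (a : L) (ha : a ∈ 0 ::ₘ s₀) (b : L) (hb : b ∈ 1 ::ₘ s₁) : IsUnit (a - b) := by
    have ha' : a ∈ IsLocalRing.maximalIdeal L := by
      rcases Multiset.mem_cons.1 ha with rfl | ha
      · exact zero_mem _
      · exact (Multiset.mem_filter.1 ha).2
    have hb' : b ∉ IsLocalRing.maximalIdeal L := by
      rcases Multiset.mem_cons.1 hb with rfl | hb
      · exact Ideal.one_notMem _
      · exact (Multiset.mem_filter.1 hb).2
    rwa [← IsLocalRing.notMem_maximalIdeal, Submodule.sub_mem_iff_right _ ha']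
  refine exists_isIdempotentElem_aeval_of_isCoprime π (z := z)
    (F := (s₀.map fun a ↦ X - C a).prod) (G := (s₁.map fun a ↦ X - C a).prod) ?_ ?_ hz
  · simpa using isCoprime_prod_X_sub_C isUnit_sub
  · rwa [← Multiset.prod_add, ← Multiset.map_add, Multiset.filter_add_not]

lemma bijOn_centralIdempotents_of_hasSplitCenter {K D : Type*} [IsDomain L] [IsIntegrallyClosed L]
    [IsLocalRing L] [IsNoetherianRing L] [Field K] [Algebra L K] [IsFractionRing L K]
    [Module.Finite L B] [Algebra L E] [Ring D] [Algebra K D] [Algebra L D] [IsScalarTower L K D]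
    (hD : HasSplitCenter K D) (j : B →ₐ[L] D) (hj : Function.Injective j)
    (hspan : Submodule.span K (Set.range j) = ⊤) (π : B →ₐ[L] E) (hπ : Function.Surjective π)
    (hker : ∀ x, π x = 0 ↔ x ∈ IsLocalRing.maximalIdeal L • (⊤ : Submodule L B)) :
    Set.BijOn π (centralIdempotents B) (centralIdempotents E) := by
  have map_center {z : B} : z ∈ Subring.center B → π z ∈ Subring.center E :=
    map_mem_center_of_span_range_eq_top L π.toRingHom (by simp [hπ.range_eq])
  refine ⟨fun e he ↦ ⟨he.1.map π, map_center he.2⟩, fun e he f hf hef ↦ ?_, ?_⟩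
  · refine eq_of_sub_mem_smul_top_of_mem_centralIdempotents
      (IsLocalRing.jacobson_eq_maximalIdeal (⊥ : Ideal L) bot_ne_top).ge he hf ?_
    rw [← hker, map_sub, hef, sub_self]
  · intro e ⟨hidem, hcentral⟩
    obtain ⟨x, rfl⟩ := hπ e
    have hx : IsCentralIdempotentMod (IsLocalRing.maximalIdeal L) x := by
      simp only [IsCentralIdempotentMod, ← hker, map_sub, map_mul, sub_eq_zero]
      exact ⟨hidem, fun b ↦ (Subring.mem_center_iff.1 hcentral (π b)).symm⟩
    obtain ⟨z, hz, hzx⟩ := hx.exists_mem_center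
    have hπz : π z = π x := by rwa [← hker, map_sub, sub_eq_zero] at hzx
    obtain ⟨s, hs⟩ := exists_aeval_prod_X_sub_C_eq_zero (K := K) j hj (IsIntegral.of_finite L z)
      (hD _ (map_mem_center_of_span_range_eq_top K j.toRingHom hspan hz))
    obtain ⟨q, hq, hπq⟩ :=
      exists_isIdempotentElem_aeval_of_aeval_prod_eq_zero π.toRingHom hs (hπz ▸ hidem)
    refine ⟨aeval z q, ⟨hq, ?_⟩, hπq.trans hπz⟩
    exact aeval_algHom_apply (Subalgebra.center L B).val ⟨z, hz⟩ q ▸ Subtype.prop _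

end SplitCenter

section DenominatorIdeal

lemma exists_mem_minimalPrimes_of_mem_minimalPrimes_iInf {R ι : Type*} [CommRing R] [Finite ι]
    {I : ι → Ideal R} {q : Ideal R} (hq : q ∈ (⨅ i, I i).minimalPrimes) :
    ∃ i, q ∈ (I i).minimalPrimes := by
  have := Fintype.ofFinite ι
  have hle : Finset.univ.inf I ≤ q := (Finset.inf_univ_eq_iInf I).le.trans hq.1.2
  obtain ⟨i, -, hi⟩ := (Ideal.IsPrime.inf_le' hq.1.1).1 hle
  exact ⟨i, ⟨hq.1.1, hi⟩, fun p hp ↦ hq.2 ⟨hp.1, (iInf_le I i).trans hp.2⟩⟩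

lemma colon_range_ne_bot {R M N : Type*} [CommRing R] [Nontrivial R] [AddCommGroup M] [Module R M]
    [AddCommGroup N] [Module R N] (f : M →ₗ[R] N) [IsLocalizedModule (nonZeroDivisors R) f]
    (y : N) : (LinearMap.range f).colon {y} ≠ ⊥ := by
  obtain ⟨⟨m, s⟩, hs⟩ := IsLocalizedModule.surj (nonZeroDivisors R) f y
  refine Submodule.ne_bot_iff _ |>.2 ⟨s, ?_, nonZeroDivisors.ne_zero s.2⟩
  exact Submodule.mem_colon_singleton.2 ⟨m, hs.symm⟩

section CommRing

variable {R K M : Type*} [CommRing R] [CommRing K] [Algebra R K] [AddCommGroup M] [Module R M]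

/-- The ideal of all `r : R` such that `r • e` lies in the image of `M` in `K ⊗ M`. For `p` prime,
`e` is defined over the localization at `p` if and only if `p` does not contain this ideal. -/
noncomputable def denominatorIdeal (e : K ⊗[R] M) : Ideal R :=
  (LinearMap.range (TensorProduct.mk R K M 1)).colon {e}

lemma mem_denominatorIdeal {e : K ⊗[R] M} {r : R} :
    r ∈ denominatorIdeal e ↔ ∃ m, 1 ⊗ₜ m = r • e :=
  Submodule.mem_colon_singleton

lemma exists_denominatorIdeal_eq_iInf_colon_one [Module.Finite R M] [Module.Projective R M]
    (e : K ⊗[R] M) : ∃ (n : ℕ) (x : Fin n → K),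
      denominatorIdeal e = ⨅ i, (1 : Submodule R K).colon {x i} := by
  obtain ⟨n, f, g, -, -, hfg⟩ := Module.Finite.exists_comp_eq_id_of_projective R M
  let coord (i : Fin n) : K ⊗[R] M →ₗ[R] K :=
    TensorProduct.rid R K ∘ₗ LinearMap.lTensor K (LinearMap.proj i ∘ₗ g)
  let b (i : Fin n) : M := f (Pi.single i 1)
  have coord_tmul (i : Fin n) (k : K) (m : M) : coord i (k ⊗ₜ m) = g m i • k := by simp [coord]
  have sum_coord (e : K ⊗[R] M) : ∑ i, coord i e ⊗ₜ b i = e := by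
    induction e with
    | zero => simp
    | add x y hx hy => simp only [map_add, TensorProduct.add_tmul, Finset.sum_add_distrib, hx, hy]
    | tmul k m =>
      have hm : ∑ i, g m i • b i = m := by
        simp only [b, ← map_smul, ← map_sum, ← Pi.single_smul, smul_eq_mul, mul_one,
          Finset.univ_sum_single]
        exact LinearMap.congr_fun hfg m
      simp only [coord_tmul, TensorProduct.smul_tmul, ← TensorProduct.tmul_sum, hm]
  refine ⟨n, fun i ↦ coord i e, le_antisymm (le_iInf fun i r hr ↦ ?_) fun r hr ↦ ?_⟩
  · obtain ⟨m, hm⟩ := mem_denominatorIdeal.1 hr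
    rw [Submodule.mem_colon_singleton, Submodule.mem_one]
    exact ⟨g m i, by rw [← map_smul, ← hm, coord_tmul, Algebra.algebraMap_eq_smul_one]⟩
  · simp only [Submodule.mem_iInf, Submodule.mem_colon_singleton, Submodule.mem_one] at hr
    choose t ht using hr
    refine mem_denominatorIdeal.2 ⟨∑ i, t i • b i, ?_⟩
    conv_rhs => rw [← sum_coord e, Finset.smul_sum]
    simp only [TensorProduct.tmul_sum, TensorProduct.smul_tmul', ← ht, ← TensorProduct.smul_tmul,
      Algebra.algebraMap_eq_smul_one]

end CommRing

variable {R K M : Type*} [CommRing R] [IsDomain R] [Field K] [Algebra R K] [IsFractionRing R K]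
  [AddCommGroup M] [Module R M]

lemma colon_one_ne_bot (x : K) : (1 : Submodule R K).colon {x} ≠ ⊥ := by
  rw [Submodule.one_eq_range]
  exact colon_range_ne_bot _ x

-- If `qx ⊆ q`, then `x` is integral, hence in `R`. Otherwise `sx = t ∉ q` for some `s ∈ q`, and
-- `q` is a minimal prime over `(s)` because `rt = s(rx) ∈ (s)` for all `r ∈ q`.
lemma exists_mem_minimalPrimes_span_singleton_of_eq_colon [IsNoetherianRing R]
    [IsIntegrallyClosed R] {q : Ideal R} [hq : q.IsPrime] {x : K}
    (hqx : q = (1 : Submodule R K).colon {x}) :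
    ∃ s, q ∈ (Ideal.span {s}).minimalPrimes := by
  have mem_iff (r : R) : r ∈ q ↔ ∃ t, algebraMap R K t = r • x := by
    rw [hqx, Submodule.mem_colon_singleton, Submodule.mem_one]
  have hinj := IsFractionRing.injective R K
  let qK : Submodule R K := Submodule.map (Algebra.linearMap R K) q
  by_cases hstable : ∀ y ∈ qK, x • y ∈ qK
  · have hbot : qK ≠ ⊥ := fun h ↦ colon_one_ne_bot x <|
      hqx ▸ Submodule.map_injective_of_injective hinj (h.trans (Submodule.map_bot _).symm)
    obtain ⟨t, ht⟩ := IsIntegrallyClosed.algebraMap_eq_of_integral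
      (isIntegral_of_smul_mem_submodule qK hbot ((IsNoetherian.noetherian q).map _) x hstable)
    exact absurd ((q.eq_top_iff_one).2 ((mem_iff 1).2 ⟨t, by rw [ht, one_smul]⟩)) hq.ne_top
  · push Not at hstable
    obtain ⟨_, ⟨s, hs, rfl⟩, hsx⟩ := hstable
    obtain ⟨t, ht⟩ := (mem_iff s).1 hs
    have htq : t ∉ q := fun htq ↦ hsx ⟨t, htq, by simp [ht, Algebra.smul_def, mul_comm]⟩
    refine ⟨s, ⟨hq, by simpa using hs⟩, fun p ⟨hp, hsp⟩ hpq r hr ↦ ?_⟩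
    obtain ⟨t', ht'⟩ := (mem_iff r).1 hr
    have hrt : r * t = t' * s := hinj <| by
      rw [map_mul, map_mul, ht, ht', Algebra.smul_def, Algebra.smul_def]; ring
    have hmem : r * t ∈ p := hrt ▸ p.mul_mem_left t' (hsp (Ideal.mem_span_singleton_self s))
    exact (hp.mem_or_mem hmem).resolve_right fun h ↦ htq (hpq h)

lemma height_eq_one_of_mem_minimalPrimes_colon_one [IsNoetherianRing R] [IsIntegrallyClosed R]
    {q : Ideal R} {x : K} (hq : q ∈ ((1 : Submodule R K).colon {x}).minimalPrimes) :
    q.height = 1 := by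
  have := hq.1.1
  obtain ⟨y, rfl⟩ := Submodule.exists_eq_colon_of_mem_minimalPrimes hq
  obtain ⟨s, hs⟩ := exists_mem_minimalPrimes_span_singleton_of_eq_colon
    (q := (1 : Submodule R K).colon {y}) rfl
  refine le_antisymm (Ideal.height_le_one_of_isPrincipal_of_mem_minimalPrimes _ _ hs) ?_
  rw [Order.one_le_iff_ne_zero, Ne, Ideal.height_eq_zero_iff_eq_bot]
  exact colon_one_ne_bot y

lemma denominatorIdeal_ne_bot (e : K ⊗[R] M) : denominatorIdeal e ≠ ⊥ :=
  colon_range_ne_bot (TensorProduct.mk R K M 1) e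

lemma height_eq_one_of_mem_minimalPrimes_denominatorIdeal [IsNoetherianRing R]
    [IsIntegrallyClosed R] [Module.Finite R M] [Module.Flat R M] {e : K ⊗[R] M} {q : Ideal R}
    (hq : q ∈ (denominatorIdeal e).minimalPrimes) : q.height = 1 := by
  have : Module.FinitePresentation R M := Module.finitePresentation_of_finite R M
  have : Module.Projective R M := Module.Flat.projective_of_finitePresentation
  obtain ⟨n, x, hx⟩ := exists_denominatorIdeal_eq_iInf_colon_one e
  obtain ⟨i, hi⟩ := exists_mem_minimalPrimes_of_mem_minimalPrimes_iInf (hx ▸ hq)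
  exact height_eq_one_of_mem_minimalPrimes_colon_one hi

end DenominatorIdeal

section Fibers

section BaseChange

variable (R A S T : Type*) [CommRing R] [Ring A] [Algebra R A] [CommRing S] [Algebra R S]
  [CommRing T] [Algebra R T] [Algebra S T] [IsScalarTower R S T]

/-- The canonical map `S ⊗ A → T ⊗ A` for a tower `R → S → T`. With `S` the local ring of `Spec R`
at `p`, the residue field gives `A_p → A(p)` and the fraction field gives `A_p → A^K`. -/
noncomputable def baseChangeMap : S ⊗[R] A →ₐ[S] T ⊗[R] A :=
  Algebra.TensorProduct.map (Algebra.ofId S T) (AlgHom.id R A)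

variable {R A S T}

lemma baseChangeMap_tmul (s : S) (a : A) :
    baseChangeMap R A S T (s ⊗ₜ a) = algebraMap S T s ⊗ₜ a :=
  rfl

lemma span_range_baseChangeMap :
    Submodule.span T (Set.range (baseChangeMap R A S T)) = ⊤ := by
  refine Submodule.eq_top_iff'.2 fun x ↦ ?_
  induction x with
  | zero => exact zero_mem _
  | add x y hx hy => exact add_mem hx hy
  | tmul t a =>
    have : t ⊗ₜ[R] a = t • baseChangeMap R A S T (1 ⊗ₜ a) := by
      rw [baseChangeMap_tmul, map_one, TensorProduct.smul_tmul', smul_eq_mul, mul_one]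
    exact this ▸ Submodule.smul_mem _ _ (Submodule.subset_span ⟨_, rfl⟩)

lemma baseChangeMap_injective [Module.Flat R A] (h : Function.Injective (algebraMap S T)) :
    Function.Injective (baseChangeMap R A S T) :=
  Module.Flat.rTensor_preserves_injective_linearMap (M := A)
    (IsScalarTower.toAlgHom R S T).toLinearMap h

lemma baseChangeMap_surjective (h : Function.Surjective (algebraMap S T)) :
    Function.Surjective (baseChangeMap R A S T) :=
  Algebra.TensorProduct.map_surjective _ _ h Function.surjective_id

lemma baseChangeMap_eq_zero_iff (h : Function.Surjective (algebraMap S T)) (x : S ⊗[R] A) :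
    baseChangeMap R A S T x = 0 ↔
      x ∈ RingHom.ker (algebraMap S T) • (⊤ : Submodule S (S ⊗[R] A)) := by
  rw [← mem_map_algebraMap_iff_mem_smul_top]
  exact SetLike.ext_iff.1 (Algebra.TensorProduct.rTensor_ker (IsScalarTower.toAlgHom R S T) h) x

lemma mem_range_baseChangeMap_iff (W : Submonoid R) [IsLocalization W S] (e : T ⊗[R] A) :
    e ∈ Set.range (baseChangeMap R A S T) ↔ ∃ s ∈ W, s ∈ denominatorIdeal e := by
  simp only [mem_denominatorIdeal]
  constructor
  · rintro ⟨x, rfl⟩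
    obtain ⟨⟨a, s⟩, hs⟩ := IsLocalizedModule.surj W (TensorProduct.mk R S A 1) x
    have hs' : (s : R) • x = 1 ⊗ₜ a := hs
    have hmap := (baseChangeMap R A S T).toLinearMap.map_smul_of_tower (s : R) x
    rw [hs', AlgHom.toLinearMap_apply, baseChangeMap_tmul, map_one] at hmap
    exact ⟨s, s.2, a, hmap⟩
  · rintro ⟨s, hs, a, ha⟩
    let u : S := IsLocalization.mk' S 1 ⟨s, hs⟩
    refine ⟨u ⊗ₜ a, ?_⟩
    calc
      baseChangeMap R A S T (u ⊗ₜ a) = u • ((1 : T) ⊗ₜ[R] a) := by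
        rw [baseChangeMap_tmul, TensorProduct.smul_tmul', Algebra.smul_def, mul_one]
      _ = (u * algebraMap R S s) • e := by rw [ha, mul_smul, algebraMap_smul]
      _ = e := by rw [IsLocalization.mk'_spec S 1 ⟨s, hs⟩, map_one, one_smul]

end BaseChange

/-- The central idempotents of the generic fiber that are defined over the local ring at `p`. -/
def centralIdempotentsDefinedAt {R : Type*} [CommRing R] [IsDomain R] (A : Type*) [Ring A]
    [Algebra R A] (p : PrimeSpectrum R) : Set (FractionRing R ⊗[R] A) :=
  {e ∈ centralIdempotents (FractionRing R ⊗[R] A) | ¬ denominatorIdeal e ≤ p.asIdeal}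

variable {R A : Type*} [CommRing R] [IsDomain R] [IsNoetherianRing R] [IsIntegrallyClosed R]
  [Ring A] [Algebra R A] [Module.Finite R A] [Module.Flat R A]

lemma ncard_centralIdempotents_fiber
    (hA : HasSplitCenter (FractionRing R) (FractionRing R ⊗[R] A)) (p : PrimeSpectrum R) :
    (centralIdempotents (resFieldAt R p ⊗[R] A)).ncard =
      (centralIdempotentsDefinedAt A p).ncard := by
  let L := Localization.AtPrime p.asIdeal
  let K := FractionRing R
  have hle := p.asIdeal.primeCompl_le_nonZeroDivisors
  have : IsDomain L := IsLocalization.isDomain_localization hle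
  have : IsIntegrallyClosed L := isIntegrallyClosed_of_isLocalization L p.asIdeal.primeCompl hle
  have : IsNoetherianRing L := IsLocalization.isNoetherianRing p.asIdeal.primeCompl L inferInstance
  have hresidue : Function.Surjective (algebraMap L (resFieldAt R p)) :=
    IsLocalRing.residue_surjective
  have hinj : Function.Injective (baseChangeMap R A L K) :=
    baseChangeMap_injective (IsFractionRing.injective L K)
  have hfiber := bijOn_centralIdempotents_of_hasSplitCenter hA (baseChangeMap R A L K) hinj
    span_range_baseChangeMap (baseChangeMap R A L (resFieldAt R p))
    (baseChangeMap_surjective hresidue) fun x ↦ by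
      rw [baseChangeMap_eq_zero_iff hresidue, ← IsLocalRing.ker_residue]; rfl
  have hgeneric := bijOn_centralIdempotents_of_injective K (baseChangeMap R A L K).toRingHom hinj
    span_range_baseChangeMap
  rw [← hfiber.ncard_eq, hgeneric.ncard_eq]
  congr 1
  ext e
  refine and_congr_right fun _ ↦ (mem_range_baseChangeMap_iff p.asIdeal.primeCompl e).trans ?_
  simp [SetLike.not_le_iff_exists, and_comm]

end Fibers

section Topology

lemma exists_eq_closure_of_isIrredCompOf_zeroLocus {R : Type*} [CommRing R] {I : Ideal R}
    {C : Set (PrimeSpectrum R)} (hC : IsIrredCompOf C (PrimeSpectrum.zeroLocus (I : Set R))) :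
    ∃ q : PrimeSpectrum R, q.asIdeal ∈ I.minimalPrimes ∧ C = closure {q} := by
  obtain ⟨hirr, hsub, hmax⟩ := hC
  have hclosed := PrimeSpectrum.isClosed_zeroLocus (I : Set R)
  have hclosure : closure C = C :=
    hmax _ hirr.closure (closure_minimal hsub hclosed) subset_closure
  obtain ⟨q, hq⟩ : ∃ q, closure {q} = C :=
    ⟨hirr.genericPoint, hirr.isGenericPoint_genericPoint_closure.def.trans hclosure⟩
  have hqI : q ∈ PrimeSpectrum.zeroLocus (I : Set R) := hsub (hq ▸ subset_closure rfl)
  refine ⟨q, ⟨⟨q.2, hqI⟩, fun p ⟨hp, hIp⟩ hpq ↦ ?_⟩, hq.symm⟩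
  let p' : PrimeSpectrum R := ⟨p, hp⟩
  have hqp : q ∈ closure {p'} :=
    ((PrimeSpectrum.le_iff_specializes p' q).1 hpq).mem_closure
  have hp' : closure {p'} = C := hmax _ isIrreducible_singleton.closure
    (closure_minimal (Set.singleton_subset_iff.2 hIp) hclosed)
    (hq ▸ closure_minimal (Set.singleton_subset_iff.2 hqp) isClosed_closure)
  have hpq' : p' ∈ closure {q} := hq ▸ hp' ▸ subset_closure rfl
  exact (PrimeSpectrum.le_iff_specializes q p').2 (specializes_iff_mem_closure.2 hpq')

lemma isReducedWeilDivisor_zeroLocus {R : Type*} [CommRing R] [IsNoetherianRing R] {I : Ideal R}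
    (hI : ∀ q ∈ I.minimalPrimes, q.height = 1) :
    IsReducedWeilDivisor (PrimeSpectrum.zeroLocus (I : Set R)) := by
  constructor
  · have hfin : {q : PrimeSpectrum R | q.asIdeal ∈ I.minimalPrimes}.Finite :=
      (Ideal.finite_minimalPrimes_of_isNoetherianRing R I).preimage
        fun _ _ _ _ h ↦ PrimeSpectrum.ext h
    refine (hfin.image fun q ↦ closure {q}).subset fun C hC ↦ ?_
    obtain ⟨q, hq, rfl⟩ := exists_eq_closure_of_isIrredCompOf_zeroLocus hC
    exact ⟨q, hq, rfl⟩
  · intro C hC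
    obtain ⟨q, hq, rfl⟩ := exists_eq_closure_of_isIrredCompOf_zeroLocus hC
    exact ⟨q, closure_closure, PrimeSpectrum.height_eq_orderHeight q ▸ hI _ hq⟩

variable {X : Type*} [TopologicalSpace X] {f : X → ℕ}

lemma isLocallyClosed_setOf_eq_of_lowerSemicontinuous (hf : LowerSemicontinuous f) (n : ℕ) :
    IsLocallyClosed {x | f x = n} := by
  refine ⟨{x | n ≤ f x}, {x | f x ≤ n}, ?_, hf.isClosed_preimage n, ?_⟩
  · rcases n with - | n
    · simp
    · exact hf.isOpen_preimage n
  · ext x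
    exact eq_comm.trans le_antisymm_iff

lemma closure_setOf_eq_subset_of_lowerSemicontinuous (hf : LowerSemicontinuous f) (n : ℕ) :
    closure {x | f x = n} ⊆ {x | f x ≤ n} :=
  closure_minimal (fun _ ↦ le_of_eq) (hf.isClosed_preimage n)

end Topology

section NumberOfBlocks

variable {R : Type*} [CommRing R] [IsDomain R] [IsNoetherianRing R] [IsIntegrallyClosed R]
  {A : Type*} [Ring A] [Algebra R A] [Module.Finite R A] [Module.Flat R A]

lemma two_pow_numBlocks_fiber
    (hA : HasSplitCenter (FractionRing R) (FractionRing R ⊗[R] A)) (p : PrimeSpectrum R) :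
    2 ^ numBlocks (resFieldAt R p ⊗[R] A) = (centralIdempotentsDefinedAt A p).ncard := by
  rw [← ncard_centralIdempotents (finite_centralIdempotents (resFieldAt R p)),
    ncard_centralIdempotents_fiber hA]

lemma numBlocks_fiber_le (hA : HasSplitCenter (FractionRing R) (FractionRing R ⊗[R] A))
    (p : PrimeSpectrum R) :
    numBlocks (resFieldAt R p ⊗[R] A) ≤ numBlocks (FractionRing R ⊗[R] A) := by
  have hfin := finite_centralIdempotents (B := FractionRing R ⊗[R] A) (FractionRing R)
  rw [← Nat.pow_le_pow_iff_right one_lt_two, two_pow_numBlocks_fiber hA,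
    ← ncard_centralIdempotents hfin]
  exact Set.ncard_le_ncard (Set.sep_subset _ _) hfin

lemma numBlocks_fiber_eq_iff (hA : HasSplitCenter (FractionRing R) (FractionRing R ⊗[R] A))
    (p : PrimeSpectrum R) :
    numBlocks (resFieldAt R p ⊗[R] A) = numBlocks (FractionRing R ⊗[R] A) ↔
      ∀ e ∈ centralIdempotents (FractionRing R ⊗[R] A), ¬ denominatorIdeal e ≤ p.asIdeal := by
  have hfin := finite_centralIdempotents (B := FractionRing R ⊗[R] A) (FractionRing R)
  rw [← Nat.pow_right_inj one_lt_two, two_pow_numBlocks_fiber hA, ← ncard_centralIdempotents hfin,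
    ← Set.sep_eq_self_iff_mem_true]
  exact ⟨fun h ↦ Set.eq_of_subset_of_ncard_le (Set.sep_subset _ _) h.ge hfin, congrArg Set.ncard⟩

lemma numBlocks_fiber_bot (hA : HasSplitCenter (FractionRing R) (FractionRing R ⊗[R] A)) :
    numBlocks (resFieldAt R ⊥ ⊗[R] A) = numBlocks (FractionRing R ⊗[R] A) :=
  (numBlocks_fiber_eq_iff hA ⊥).2 fun e _ he ↦ denominatorIdeal_ne_bot e (le_bot_iff.1 he)

lemma lowerSemicontinuous_numBlocks_fiber
    (hA : HasSplitCenter (FractionRing R) (FractionRing R ⊗[R] A)) :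
    LowerSemicontinuous fun p : PrimeSpectrum R ↦ numBlocks (resFieldAt R p ⊗[R] A) := by
  intro p n hn
  have hfin (q : PrimeSpectrum R) : (centralIdempotentsDefinedAt A q).Finite :=
    (finite_centralIdempotents (FractionRing R)).subset (Set.sep_subset _ _)
  have hnhds : ∀ᶠ q : PrimeSpectrum R in nhds p,
      ∀ e ∈ centralIdempotentsDefinedAt A p, ¬ denominatorIdeal e ≤ q.asIdeal :=
    (Filter.eventually_all_finite (hfin p)).2 fun e he ↦
      (PrimeSpectrum.isClosed_zeroLocus _).isOpen_compl.mem_nhds he.2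
  filter_upwards [hnhds] with q hq
  refine hn.trans_le ((Nat.pow_le_pow_iff_right one_lt_two).1 ?_)
  rw [two_pow_numBlocks_fiber hA, two_pow_numBlocks_fiber hA]
  exact Set.ncard_le_ncard (fun e he ↦ ⟨he.1, hq e he⟩) (hfin q)

lemma setOf_numBlocks_fiber_lt (hA : HasSplitCenter (FractionRing R) (FractionRing R ⊗[R] A)) :
    {p : PrimeSpectrum R |
      numBlocks (resFieldAt R p ⊗[R] A) < numBlocks (FractionRing R ⊗[R] A)} =
    PrimeSpectrum.zeroLocus (⨅ e : centralIdempotents (FractionRing R ⊗[R] A),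
      denominatorIdeal e.1 : Ideal R) := by
  have : Fintype (centralIdempotents (FractionRing R ⊗[R] A)) :=
    (finite_centralIdempotents (FractionRing R)).fintype
  ext p
  rw [Set.mem_ofPred_eq, (numBlocks_fiber_le hA p).lt_iff_ne, Ne, numBlocks_fiber_eq_iff hA,
    PrimeSpectrum.mem_zeroLocus, SetLike.coe_subset_coe, ← Finset.inf_univ_eq_iInf,
    p.isPrime.inf_le']
  simp

lemma isReducedWeilDivisor_setOf_numBlocks_fiber_lt
    (hA : HasSplitCenter (FractionRing R) (FractionRing R ⊗[R] A)) :
    IsReducedWeilDivisor {p : PrimeSpectrum R |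
      numBlocks (resFieldAt R p ⊗[R] A) < numBlocks (FractionRing R ⊗[R] A)} := by
  have : Finite (centralIdempotents (FractionRing R ⊗[R] A)) :=
    finite_centralIdempotents (FractionRing R)
  rw [setOf_numBlocks_fiber_lt hA]
  refine isReducedWeilDivisor_zeroLocus fun q hq ↦ ?_
  obtain ⟨e, he⟩ := exists_mem_minimalPrimes_of_mem_minimalPrimes_iInf hq
  exact height_eq_one_of_mem_minimalPrimes_denominatorIdeal he

end NumberOfBlocks

theorem stmt5_general (R : Type u) [CommRing R] [IsDomain R] [IsNoetherianRing R]
    [IsIntegrallyClosed R] (A : Type v) [Ring A] [Algebra R A] [Module.Finite R A] [Module.Flat R A]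
    (hA : HasSplitCenter (FractionRing R) (FractionRing R ⊗[R] A)) :
    LowerSemicontinuous (fun p : PrimeSpectrum R => numBlocks (resFieldAt R p ⊗[R] A)) ∧
    (∀ n : ℕ,
      IsLocallyClosed {p : PrimeSpectrum R | numBlocks (resFieldAt R p ⊗[R] A) = n} ∧
      closure {p : PrimeSpectrum R | numBlocks (resFieldAt R p ⊗[R] A) = n} ⊆
        {p : PrimeSpectrum R | numBlocks (resFieldAt R p ⊗[R] A) ≤ n}) ∧
    (∀ p : PrimeSpectrum R,
      numBlocks (resFieldAt R p ⊗[R] A) ≤ numBlocks (FractionRing R ⊗[R] A)) ∧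
    (∃ p : PrimeSpectrum R,
      numBlocks (resFieldAt R p ⊗[R] A) = numBlocks (FractionRing R ⊗[R] A)) ∧
    IsClosed {p : PrimeSpectrum R |
      numBlocks (resFieldAt R p ⊗[R] A) < numBlocks (FractionRing R ⊗[R] A)} ∧
    ({p : PrimeSpectrum R |
        numBlocks (resFieldAt R p ⊗[R] A) < numBlocks (FractionRing R ⊗[R] A)} = ∅ ∨
      IsReducedWeilDivisor {p : PrimeSpectrum R |
        numBlocks (resFieldAt R p ⊗[R] A) < numBlocks (FractionRing R ⊗[R] A)}) := by
  have hlsc := lowerSemicontinuous_numBlocks_fiber hA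
  refine ⟨hlsc, fun n ↦ ⟨isLocallyClosed_setOf_eq_of_lowerSemicontinuous hlsc n,
    closure_setOf_eq_subset_of_lowerSemicontinuous hlsc n⟩, numBlocks_fiber_le hA,
    ⟨⊥, numBlocks_fiber_bot hA⟩, ?_, Or.inr (isReducedWeilDivisor_setOf_numBlocks_fiber_lt hA)⟩
  rw [setOf_numBlocks_fiber_lt hA]
  exact PrimeSpectrum.isClosed_zeroLocus _

/-- **Corollary `normal_split_corollary_details`.** -/
theorem stmt5 (R : Type u) [CommRing R] [IsDomain R] [IsNoetherianRing R] [IsIntegrallyClosed R]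
    (A : Type u) [Ring A] [Algebra R A] [Module.Finite R A] [Module.Flat R A]
    (hsplit : IsSplitAlgebra (FractionRing R) (FractionRing R ⊗[R] A)) :
    LowerSemicontinuous (fun p : PrimeSpectrum R => numBlocks (resFieldAt R p ⊗[R] A)) ∧
    (∀ n : ℕ,
      IsLocallyClosed {p : PrimeSpectrum R | numBlocks (resFieldAt R p ⊗[R] A) = n} ∧
      closure {p : PrimeSpectrum R | numBlocks (resFieldAt R p ⊗[R] A) = n} ⊆
        {p : PrimeSpectrum R | numBlocks (resFieldAt R p ⊗[R] A) ≤ n}) ∧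
    (∀ p : PrimeSpectrum R,
      numBlocks (resFieldAt R p ⊗[R] A) ≤ numBlocks (FractionRing R ⊗[R] A)) ∧
    (∃ p : PrimeSpectrum R,
      numBlocks (resFieldAt R p ⊗[R] A) = numBlocks (FractionRing R ⊗[R] A)) ∧
    IsClosed {p : PrimeSpectrum R |
      numBlocks (resFieldAt R p ⊗[R] A) < numBlocks (FractionRing R ⊗[R] A)} ∧
    ({p : PrimeSpectrum R |
        numBlocks (resFieldAt R p ⊗[R] A) < numBlocks (FractionRing R ⊗[R] A)} = ∅ ∨
      IsReducedWeilDivisor {p : PrimeSpectrum R |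
        numBlocks (resFieldAt R p ⊗[R] A) < numBlocks (FractionRing R ⊗[R] A)}) :=
  stmt5_general R A hsplit.hasSplitCenter
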